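/- Let p > 2 and let u ∈ W^{1,p}(B_1; S^n) be a smooth p-harmonic map. Then for any 0 < r < R < 1: (p−2)·log(R/r)·‖∇u‖²_{L²(B_r)} ≤ p·‖(1+|∇u|²)^{p/2−1}‖_{L^∞(B_R \ B_r)}·(2‖∇u‖²_{L²(B_R\B_r)} + R² − r²). -/

import Mathlib

/-!
Write `e = |∇u|²` and `W = (1 + e) ^ (p / 2 - 1)`. Since `div (W ∇u)` is parallel to `u`, hence
orthogonal to every `∂ᵢu`, the stress tensor `Tᵢⱼ = ((1 + e) W - c) δᵢⱼ - p W ⟨∂ᵢu, ∂ⱼu⟩` is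
divergence free for every constant `c`. So the field `H = T x` satisfies
`div H = tr T = 2 ((1 + e) W - c) - p W e` (`stressRadial_div`).

Instead of integrating the monotonicity formula over spheres, `H` is tested against the gradient
of the Lipschitz cutoff `f = log (R / max r (min |x| R))` (`logCut`), which equals `log (R / r)` on
`B_r`, vanishes off `B_R`, and has gradient `-x / |x|²` on the annulus `A` in between. Integration
by parts for a Lipschitz function against a compactly supported `C¹` one gives
`∫ f (-div H) = ∫_A ⟨∇f, H⟩ = ∫_A (p W |∇u x|² / |x|² + c - (1 + e) W)`.

The choice `c = 3 / 2` works on both sides. It is large enough for `-div H ≥ (p - 2) e`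
(`rpow_aux`), so the left side is at least `(p - 2) log (R / r) ∫_{B_r} e`. It is small enough
for the right side: as `|∇u x|² ≤ e |x|²` and `W ≥ 1`, the integrand there is at most
`(p - 1) W e + 1 / 2` (`flux_le`), and the constant contributes
`(π / 2) (R² - r²) ≤ p (sup_A W) (R² - r²)`, because `π / 2 ≤ 2 < p` and `sup_A W ≥ 1`.
-/

open MeasureTheory Metric Real

/-- The Dirichlet energy density `|∇u|²(x) = Σᵢ |∂ᵢu(x)|²`. -/
noncomputable def enDen {n : ℕ} (u : EuclideanSpace ℝ (Fin 2) → EuclideanSpace ℝ (Fin (n + 1)))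
    (x : EuclideanSpace ℝ (Fin 2)) : ℝ :=
  ∑ i : Fin 2, ‖fderiv ℝ u x (EuclideanSpace.single i (1 : ℝ))‖ ^ 2

/-- With `t = q e` and `W = (1 + e) ^ q` this reads `W (1 - t) + t ≤ 3 / 2`. For `t ≥ 1` it is
`(t - 1) (W - 1) ≥ 0`; for `t < 1` it follows from `W ≤ exp t ≤ (1 - t / 2)⁻²`. -/
lemma rpow_aux (q e : ℝ) (hq : 0 < q) (he : 0 ≤ e) :
    q * e ≤ q * e * (1 + e) ^ q - (1 + e) ^ q + 3 / 2 := by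
  have hW1 : 1 ≤ (1 + e) ^ q := Real.one_le_rpow (by linarith) hq.le
  set t := q * e with ht
  have ht0 : 0 ≤ t := by positivity
  rcases le_or_gt 1 t with h | h
  · nlinarith [mul_nonneg (sub_nonneg.2 h) (sub_nonneg.2 hW1)]
  · have hWexp : (1 + e) ^ q ≤ Real.exp t := by
      rw [Real.rpow_def_of_pos (by linarith)]
      apply Real.exp_le_exp.2
      have := Real.log_le_sub_one_of_pos (show 0 < 1 + e by linarith)
      nlinarith
    have hs : Real.exp t * (1 - t / 2) ^ 2 ≤ 1 := by
      have h1 : 1 - t / 2 ≤ Real.exp (-(t / 2)) := by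
        have := Real.add_one_le_exp (-(t / 2)); linarith
      have h2 : Real.exp t * Real.exp (-(t / 2)) ^ 2 = 1 := by
        rw [← Real.exp_nat_mul, ← Real.exp_add]; simp; ring
      refine le_trans ?_ h2.le
      gcongr
      linarith
    have h3 : (1 + e) ^ q * (1 - t / 2) ^ 2 ≤ 1 :=
      le_trans (by gcongr) hs
    generalize (1 + e) ^ q = W at *
    -- cleared form of `(1 - t) / (1 - t / 2) ^ 2 + t ≤ 3 / 2`
    have h4 : (1 - t) ≤ (3 / 2 - t) * (1 - t / 2) ^ 2 := by
      nlinarith [mul_nonneg ht0 (sq_nonneg (t - 2/3)), mul_nonneg (sub_nonneg.2 h.le) (sq_nonneg (t - 2/3)), sq_nonneg (t-2/3), mul_nonneg ht0 (sub_nonneg.2 h.le)]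
    have h5 : (0:ℝ) < (1 - t / 2) ^ 2 := by nlinarith
    have h6 : W * (1 - t) ≤ 3 / 2 - t := by
      have : W * (1 - t) * (1 - t / 2) ^ 2 ≤ (3 / 2 - t) * (1 - t / 2) ^ 2 := by nlinarith
      exact le_of_mul_le_mul_right this h5
    nlinarith

/-! ### Divergence of the stress field -/

/-- The `j`-th component at `y` of the field `T y`, where
`Tᵢⱼ = ((1 + |∇u|²) ^ (p / 2) - c) δᵢⱼ - p (1 + |∇u|²) ^ (p / 2 - 1) ⟨∂ᵢu, ∂ⱼu⟩` is the stress tensor,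
normalised by the constant `c`. The power `p / 2` is written as `1 + (p / 2 - 1)`, and
`∑ᵢ yᵢ ∂ᵢu` as `fderiv ℝ u y y`. -/
noncomputable def stressRadial {n : ℕ} (p c : ℝ)
    (u : EuclideanSpace ℝ (Fin 2) → EuclideanSpace ℝ (Fin (n + 1))) (j : Fin 2)
    (y : EuclideanSpace ℝ (Fin 2)) : ℝ :=
  ((1 + enDen u y) * (1 + enDen u y) ^ (p / 2 - 1) - c) * y j
    - p * inner ℝ ((1 + enDen u y) ^ (p / 2 - 1) • fderiv ℝ u y (EuclideanSpace.single j (1 : ℝ)))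
        (fderiv ℝ u y y)

lemma enDen_nonneg {n : ℕ} (u : EuclideanSpace ℝ (Fin 2) → EuclideanSpace ℝ (Fin (n + 1)))
    (x : EuclideanSpace ℝ (Fin 2)) : 0 ≤ enDen u x :=
  Finset.sum_nonneg fun _ _ => by positivity

lemma two_le_smooth : (2 : WithTop ℕ∞) ≤ ((⊤ : ℕ∞) : WithTop ℕ∞) :=
  WithTop.coe_le_coe.2 (le_top : (2 : ℕ∞) ≤ ⊤)

lemma eq_single_add_single (x : EuclideanSpace ℝ (Fin 2)) :
    x = x 0 • EuclideanSpace.single (0 : Fin 2) (1 : ℝ)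
      + x 1 • EuclideanSpace.single (1 : Fin 2) (1 : ℝ) := by
  ext i; fin_cases i <;> simp

section
variable {n : ℕ} {u : EuclideanSpace ℝ (Fin 2) → EuclideanSpace ℝ (Fin (n + 1))}

lemma contDiffOn_fderiv_ball (hsm : ContDiffOn ℝ (⊤ : ℕ∞) u (ball 0 1)) :
    ContDiffOn ℝ 1 (fderiv ℝ u) (ball 0 1) :=
  hsm.fderiv_of_isOpen isOpen_ball (by rw [one_add_one_eq_two]; exact two_le_smooth)

lemma contDiffOn_enDen (hsm : ContDiffOn ℝ (⊤ : ℕ∞) u (ball 0 1)) :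
    ContDiffOn ℝ 1 (enDen u) (ball 0 1) := by
  have hD := contDiffOn_fderiv_ball hsm
  unfold enDen
  exact ContDiffOn.sum fun i _ => (hD.clm_apply contDiffOn_const).norm_sq ℝ

lemma contDiffOn_weight (hsm : ContDiffOn ℝ (⊤ : ℕ∞) u (ball 0 1)) (q : ℝ) :
    ContDiffOn ℝ 1 (fun y => (1 + enDen u y) ^ q) (ball 0 1) :=
  (contDiffOn_const.add (contDiffOn_enDen hsm)).rpow_const_of_ne
    fun x _ => (by linarith [enDen_nonneg u x] : (0:ℝ) < 1 + enDen u x).ne'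

lemma contDiffOn_stressRadial (hsm : ContDiffOn ℝ (⊤ : ℕ∞) u (ball 0 1)) (p c : ℝ) (j : Fin 2) :
    ContDiffOn ℝ 1 (stressRadial p c u j) (ball 0 1) := by
  have hD := contDiffOn_fderiv_ball hsm
  have he := contDiffOn_enDen hsm
  have hW := contDiffOn_weight hsm (p / 2 - 1)
  unfold stressRadial
  refine ContDiffOn.sub (ContDiffOn.mul ?_ ?_) (contDiffOn_const.mul ?_)
  · exact ((contDiffOn_const.add he).mul hW).sub contDiffOn_const
  · exact (EuclideanSpace.proj (𝕜 := ℝ) j : EuclideanSpace ℝ (Fin 2) →L[ℝ] ℝ).contDiff.contDiffOn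
  · exact (hW.smul (hD.clm_apply contDiffOn_const)).inner ℝ (hD.clm_apply contDiffOn_id)

/-- Tangential derivatives of a sphere-valued map are orthogonal to its value. -/
lemma inner_sphere_deriv (hsm : ContDiffOn ℝ (⊤ : ℕ∞) u (ball 0 1))
    (hsph : ∀ x ∈ ball (0 : EuclideanSpace ℝ (Fin 2)) 1, ‖u x‖ = 1)
    {x : EuclideanSpace ℝ (Fin 2)} (hx : x ∈ ball (0 : EuclideanSpace ℝ (Fin 2)) 1)
    (v : EuclideanSpace ℝ (Fin 2)) : inner ℝ (u x) (fderiv ℝ u x v) = 0 := by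
  have hd : DifferentiableAt ℝ u x :=
    (hsm.contDiffAt (isOpen_ball.mem_nhds hx)).differentiableAt (by simp)
  have h1 := hd.hasFDerivAt.norm_sq
  have h2 : HasFDerivAt (fun y => ‖u y‖ ^ 2) (0 : EuclideanSpace ℝ (Fin 2) →L[ℝ] ℝ) x := by
    refine (hasFDerivAt_const (1:ℝ) x).congr_of_eventuallyEq ?_
    filter_upwards [isOpen_ball.mem_nhds hx] with y hy
    simp [hsph y hy]
  have h3 := congrArg (fun L => L v) (h1.unique h2)
  simpa using h3

/-- Pohozaev identity: for a `p`-harmonic map, `div (T x) = tr T`. The terms with second derivatives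
of `u` cancel by symmetry of the Hessian and by `inner_sphere_deriv`. -/
lemma stressRadial_div (p c : ℝ)
    (hsm : ContDiffOn ℝ (⊤ : ℕ∞) u (ball 0 1))
    (hsph : ∀ x ∈ ball (0 : EuclideanSpace ℝ (Fin 2)) 1, ‖u x‖ = 1)
    {x : EuclideanSpace ℝ (Fin 2)} (hx : x ∈ ball (0 : EuclideanSpace ℝ (Fin 2)) 1)
    (hEL : (∑ i : Fin 2, fderiv ℝ
          (fun y => ((1 + enDen u y) ^ (p / 2 - 1)) • fderiv ℝ u y (EuclideanSpace.single i (1 : ℝ)))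
          x (EuclideanSpace.single i (1 : ℝ)))
        = -(((1 + enDen u x) ^ (p / 2 - 1)) * enDen u x) • u x) :
    ∑ j : Fin 2, fderiv ℝ (stressRadial p c u j) x (EuclideanSpace.single j (1 : ℝ))
      = 2 * ((1 + enDen u x) * (1 + enDen u x) ^ (p / 2 - 1) - c)
        - p * ((1 + enDen u x) ^ (p / 2 - 1) * enDen u x) := by
  have hnhds := isOpen_ball.mem_nhds hx
  have hu := hsm.contDiffAt hnhds
  have hpos : 0 < 1 + enDen u x := by linarith [enDen_nonneg u x]
  have hsymm : IsSymmSndFDerivAt ℝ u x :=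
    hu.isSymmSndFDerivAt (by
      simp only [minSmoothness_of_isRCLikeNormedField]
      exact two_le_smooth)
  have hD : HasFDerivAt (fderiv ℝ u) (fderiv ℝ (fderiv ℝ u) x) x :=
    (((contDiffOn_fderiv_ball hsm).contDiffAt hnhds).differentiableAt (by simp)).hasFDerivAt
  have he : HasFDerivAt (enDen u) (fderiv ℝ (enDen u) x) x :=
    (((contDiffOn_enDen hsm).contDiffAt hnhds).differentiableAt (by simp)).hasFDerivAt
  have hW : HasFDerivAt (fun y => (1 + enDen u y) ^ (p / 2 - 1))
      (((p / 2 - 1) * (1 + enDen u x) ^ (p / 2 - 1 - 1)) • fderiv ℝ (enDen u) x) x :=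
    (he.const_add 1).rpow_const (Or.inl hpos.ne')
  have hDv : ∀ v, HasFDerivAt (fun y => fderiv ℝ u y v) ((fderiv ℝ (fderiv ℝ u) x).flip v) x :=
    fun v => by simpa using hD.clm_apply (hasFDerivAt_const v x)
  have hV := hD.clm_apply (hasFDerivAt_id x)
  have hZ : ∀ j : Fin 2, DifferentiableAt ℝ (fun y => ((1 + enDen u y) ^ (p / 2 - 1)) •
      fderiv ℝ u y (EuclideanSpace.single j (1 : ℝ))) x := fun j =>
    hW.differentiableAt.smul (hDv _).differentiableAt
  have hde : ∀ v, fderiv ℝ (enDen u) x v = ∑ i : Fin 2,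
      2 * inner ℝ (fderiv ℝ u x (EuclideanSpace.single i (1 : ℝ)))
        (fderiv ℝ (fderiv ℝ u) x v (EuclideanSpace.single i (1 : ℝ))) := by
    intro v
    have h := HasFDerivAt.fun_sum (u := Finset.univ) fun (i : Fin 2) _ =>
      (hDv (EuclideanSpace.single i (1 : ℝ))).norm_sq
    have h2 := congrArg (fun L => L v) (he.unique h)
    simpa using h2
  have hrp : (1 + enDen u x) * (1 + enDen u x) ^ (p / 2 - 1 - 1)
      = (1 + enDen u x) ^ (p / 2 - 1) := by
    rw [Real.rpow_sub_one hpos.ne']; field_simp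
  have hS : ∀ j : Fin 2, fderiv ℝ (stressRadial p c u j) x (EuclideanSpace.single j (1 : ℝ))
      = (p / 2) * (1 + enDen u x) ^ (p / 2 - 1)
          * (fderiv ℝ (enDen u) x (EuclideanSpace.single j (1 : ℝ)) * x j)
        + ((1 + enDen u x) * (1 + enDen u x) ^ (p / 2 - 1) - c)
        - p * ((1 + enDen u x) ^ (p / 2 - 1) * ‖fderiv ℝ u x (EuclideanSpace.single j (1 : ℝ))‖ ^ 2
          + (1 + enDen u x) ^ (p / 2 - 1)
            * inner ℝ (fderiv ℝ u x (EuclideanSpace.single j (1 : ℝ)))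
                (fderiv ℝ (fderiv ℝ u) x (EuclideanSpace.single j (1 : ℝ)) x)
          + inner ℝ (fderiv ℝ (fun y => ((1 + enDen u y) ^ (p / 2 - 1)) •
              fderiv ℝ u y (EuclideanSpace.single j (1 : ℝ))) x (EuclideanSpace.single j (1 : ℝ)))
              (fderiv ℝ u x x)) := by
    intro j
    have hproj : HasFDerivAt (fun y : EuclideanSpace ℝ (Fin 2) => y j)
        (EuclideanSpace.proj (𝕜 := ℝ) j : EuclideanSpace ℝ (Fin 2) →L[ℝ] ℝ) x :=
      (EuclideanSpace.proj (𝕜 := ℝ) j : EuclideanSpace ℝ (Fin 2) →L[ℝ] ℝ).hasFDerivAt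
    have h := ((((he.const_add 1).mul hW).sub_const c).mul hproj).sub
      (((hZ j).hasFDerivAt.inner ℝ hV).const_mul p)
    have h2 : HasFDerivAt (stressRadial p c u j) _ x := h
    rw [h2.fderiv]
    simp [fderivInnerCLM_apply, inner_add_right, inner_smul_left]
    linear_combination ((p / 2 - 1) * (fderiv ℝ (enDen u) x (EuclideanSpace.single j (1 : ℝ)) * x j)) * hrp
  have hperp : ∑ j : Fin 2, inner ℝ (fderiv ℝ (fun y => ((1 + enDen u y) ^ (p / 2 - 1)) •
              fderiv ℝ u y (EuclideanSpace.single j (1 : ℝ))) x (EuclideanSpace.single j (1 : ℝ)))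
              (fderiv ℝ u x x) = 0 := by
    rw [← sum_inner, hEL, inner_smul_left, inner_sphere_deriv hsm hsph hx, mul_zero]
  have hradial : ∑ j : Fin 2, fderiv ℝ (enDen u) x (EuclideanSpace.single j (1 : ℝ)) * x j
      = ∑ j : Fin 2, 2 * inner ℝ (fderiv ℝ u x (EuclideanSpace.single j (1 : ℝ)))
                (fderiv ℝ (fderiv ℝ u) x (EuclideanSpace.single j (1 : ℝ)) x) := by
    have h1 : fderiv ℝ (enDen u) x x
        = ∑ j : Fin 2, fderiv ℝ (enDen u) x (EuclideanSpace.single j (1 : ℝ)) * x j := by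
      have h := congrArg (fderiv ℝ (enDen u) x) (eq_single_add_single x)
      rw [map_add, map_smul, map_smul, smul_eq_mul, smul_eq_mul] at h
      rw [h, Fin.sum_univ_two, mul_comm (x 0), mul_comm (x 1)]
    rw [← h1, hde x]
    exact Finset.sum_congr rfl fun j _ => by rw [hsymm x]
  have hen : enDen u x = ∑ i : Fin 2, ‖fderiv ℝ u x (EuclideanSpace.single i (1 : ℝ))‖ ^ 2 := rfl
  simp only [hS]
  simp only [Fin.sum_univ_two] at hperp hradial hen ⊢
  generalize (1 + enDen u x) ^ (p / 2 - 1) = W at *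
  linear_combination (p / 2 * W) * hradial - p * hperp + p * W * hen

end

/-! ### The logarithmic cutoff -/

/-- The radial logarithmic cutoff: `log (R / r)` for `‖x‖ ≤ r`, `log (R / ‖x‖)` for
`r ≤ ‖x‖ ≤ R`, and `0` for `‖x‖ ≥ R`. -/
noncomputable def logCut (r R : ℝ) (x : EuclideanSpace ℝ (Fin 2)) : ℝ :=
  Real.log (R / max r (min ‖x‖ R))

section
variable {r R : ℝ}

lemma logCut_lipschitz (hr : 0 < r) (hrR : r < R) :
    LipschitzWith (Real.toNNReal r⁻¹) (logCut r R) := by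
  refine LipschitzWith.of_le_add_mul _ fun x y => ?_
  rw [Real.coe_toNNReal _ (by positivity)]
  set a := max r (min ‖x‖ R) with ha
  set b := max r (min ‖y‖ R) with hb
  have hra : r ≤ a := le_max_left _ _
  have hrb : r ≤ b := le_max_left _ _
  have hab : b - a ≤ dist x y := by
    have h1 : |b - a| ≤ |min ‖y‖ R - min ‖x‖ R| := by
      have := abs_max_sub_max_le_abs (min ‖y‖ R) (min ‖x‖ R) r
      rwa [max_comm, max_comm (min ‖x‖ R)] at this
    have h2 : |min ‖y‖ R - min ‖x‖ R| ≤ |‖y‖ - ‖x‖| := by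
      simpa using abs_min_sub_min_le_max ‖y‖ R ‖x‖ R
    have h3 := abs_norm_sub_norm_le y x
    rw [dist_comm, dist_eq_norm]
    exact (le_abs_self _).trans (h1.trans (h2.trans h3))
  have hlog : Real.log b - Real.log a ≤ r⁻¹ * dist x y := by
    have ha0 : 0 < a := by linarith
    have hb0 : 0 < b := by linarith
    rw [← Real.log_div hb0.ne' ha0.ne']
    have h1 := Real.log_le_sub_one_of_pos (div_pos hb0 ha0)
    have h2 : b / a - 1 = a⁻¹ * (b - a) := by field_simp
    calc Real.log (b / a) ≤ a⁻¹ * (b - a) := by linarith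
      _ ≤ a⁻¹ * dist x y := by gcongr
      _ ≤ r⁻¹ * dist x y := by gcongr
  unfold logCut
  rw [Real.log_div (by linarith) (by linarith), Real.log_div (by linarith) (by linarith)]
  linarith

lemma logCut_nonneg (hr : 0 < r) (hrR : r < R) (x : EuclideanSpace ℝ (Fin 2)) :
    0 ≤ logCut r R x := by
  refine Real.log_nonneg ?_
  rw [one_le_div (lt_of_lt_of_le hr (le_max_left _ _))]
  exact max_le hrR.le (min_le_right _ _)

lemma logCut_inner {x : EuclideanSpace ℝ (Fin 2)} (hx : ‖x‖ ≤ r) :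
    logCut r R x = Real.log (R / r) := by
  unfold logCut
  rw [max_eq_left ((min_le_left _ _).trans hx)]

lemma logCut_outer (hr : 0 < r) (hrR : r < R) {x : EuclideanSpace ℝ (Fin 2)} (hx : R ≤ ‖x‖) :
    logCut r R x = 0 := by
  unfold logCut
  rw [min_eq_right hx, max_eq_right hrR.le, div_self (by linarith), Real.log_one]

lemma lineDeriv_logCut_inner {x : EuclideanSpace ℝ (Fin 2)} (hx : ‖x‖ < r)
    (v : EuclideanSpace ℝ (Fin 2)) : lineDeriv ℝ (logCut r R) x v = 0 := by
  have h : logCut r R =ᶠ[nhds x] fun _ => Real.log (R / r) := by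
    filter_upwards [(isOpen_lt continuous_norm continuous_const).mem_nhds hx] with y hy
    exact logCut_inner (le_of_lt hy)
  rw [h.lineDeriv_eq, (differentiableAt_const _).lineDeriv_eq_fderiv]
  simp

lemma lineDeriv_logCut_outer (hr : 0 < r) (hrR : r < R) {x : EuclideanSpace ℝ (Fin 2)}
    (hx : R < ‖x‖) (v : EuclideanSpace ℝ (Fin 2)) : lineDeriv ℝ (logCut r R) x v = 0 := by
  have h : logCut r R =ᶠ[nhds x] fun _ => 0 := by
    filter_upwards [(isOpen_lt continuous_const continuous_norm).mem_nhds hx] with y hy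
    exact logCut_outer hr hrR (le_of_lt hy)
  rw [h.lineDeriv_eq, (differentiableAt_const _).lineDeriv_eq_fderiv]
  simp

lemma lineDeriv_logCut_annulus (hr : 0 < r) {x : EuclideanSpace ℝ (Fin 2)}
    (hx : r < ‖x‖) (hx' : ‖x‖ < R) (v : EuclideanSpace ℝ (Fin 2)) :
    lineDeriv ℝ (logCut r R) x v = -(inner ℝ x v / ‖x‖ ^ 2) := by
  have h : logCut r R =ᶠ[nhds x] fun y => Real.log R - (1 / 2) * Real.log (‖y‖ ^ 2) := by
    filter_upwards [(isOpen_lt continuous_const continuous_norm).mem_nhds hx,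
      (isOpen_lt continuous_norm continuous_const).mem_nhds hx'] with y (hy : r < ‖y‖) (hy' : ‖y‖ < R)
    unfold logCut
    rw [min_eq_left hy'.le, max_eq_right hy.le, Real.log_div (by linarith) (by linarith),
      Real.log_pow]
    push_cast
    ring
  have hx0 : ‖x‖ ^ 2 ≠ 0 := by have : 0 < ‖x‖ := by linarith
                               positivity
  have hd := ((((hasFDerivAt_id x).norm_sq).log hx0).const_mul (1 / 2)).const_sub (Real.log R)
  have hd' : HasFDerivAt (fun y => Real.log R - (1 / 2) * Real.log (‖y‖ ^ 2)) _ x := hd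
  rw [h.lineDeriv_eq, hd'.differentiableAt.lineDeriv_eq_fderiv, hd'.fderiv]
  simp
  ring

end

/-! ### Pointwise bounds on the annulus -/

section
variable {n : ℕ} {u : EuclideanSpace ℝ (Fin 2) → EuclideanSpace ℝ (Fin (n + 1))}

lemma norm_fderiv_sq_le (x : EuclideanSpace ℝ (Fin 2)) :
    ‖fderiv ℝ u x x‖ ^ 2 ≤ enDen u x * ‖x‖ ^ 2 := by
  have h := congrArg (fderiv ℝ u x) (eq_single_add_single x)
  rw [map_add, map_smul, map_smul] at h
  rw [h, EuclideanSpace.real_norm_sq_eq x]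
  simp only [enDen, Fin.sum_univ_two]
  set a := fderiv ℝ u x (EuclideanSpace.single 0 1)
  set b := fderiv ℝ u x (EuclideanSpace.single 1 1)
  have h1 : ‖x 0 • a + x 1 • b‖ ≤ |x 0| * ‖a‖ + |x 1| * ‖b‖ := by
    refine (norm_add_le _ _).trans_eq ?_
    rw [norm_smul, norm_smul, Real.norm_eq_abs, Real.norm_eq_abs]
  calc ‖x 0 • a + x 1 • b‖ ^ 2 ≤ (|x 0| * ‖a‖ + |x 1| * ‖b‖) ^ 2 := by gcongr
    _ ≤ (‖a‖ ^ 2 + ‖b‖ ^ 2) * (|x 0| ^ 2 + |x 1| ^ 2) := by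
      nlinarith [sq_nonneg (|x 0| * ‖b‖ - |x 1| * ‖a‖)]
    _ = _ := by rw [sq_abs, sq_abs]

/-- The quadratic form `T x · x`. -/
lemma stressRadial_radial (p c : ℝ) (x : EuclideanSpace ℝ (Fin 2)) :
    ∑ j : Fin 2, x j * stressRadial p c u j x
      = ((1 + enDen u x) * (1 + enDen u x) ^ (p / 2 - 1) - c) * ‖x‖ ^ 2
        - p * (1 + enDen u x) ^ (p / 2 - 1) * ‖fderiv ℝ u x x‖ ^ 2 := by
  have h := congrArg (fderiv ℝ u x) (eq_single_add_single x)
  rw [map_add, map_smul, map_smul] at h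
  have h2 : ‖fderiv ℝ u x x‖ ^ 2
      = x 0 * inner ℝ (fderiv ℝ u x (EuclideanSpace.single 0 1)) (fderiv ℝ u x x)
        + x 1 * inner ℝ (fderiv ℝ u x (EuclideanSpace.single 1 1)) (fderiv ℝ u x x) := by
    rw [← real_inner_self_eq_norm_sq]
    nth_rewrite 1 [h]
    rw [inner_add_left, real_inner_smul_left, real_inner_smul_left]
  rw [h2, EuclideanSpace.real_norm_sq_eq x]
  simp only [stressRadial, Fin.sum_univ_two, real_inner_smul_left]
  ring

/-- Bound for `⟨∇f, T x⟩` on the annulus, where `f` is the logarithmic cutoff and `c = 3 / 2`. -/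
lemma flux_le {p r R : ℝ} (hp : 2 < p) (hr : 0 < r) {x : EuclideanSpace ℝ (Fin 2)}
    (hx : r < ‖x‖) (hx' : ‖x‖ < R) :
    ∑ j : Fin 2, lineDeriv ℝ (logCut r R) x (EuclideanSpace.single j (1 : ℝ))
        * stressRadial p (3 / 2) u j x
      ≤ (p - 1) * (1 + enDen u x) ^ (p / 2 - 1) * enDen u x + 1 / 2 := by
  have hx0 : 0 < ‖x‖ ^ 2 := by have : 0 < ‖x‖ := by linarith
                               positivity
  have hW : 1 ≤ (1 + enDen u x) ^ (p / 2 - 1) :=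
    Real.one_le_rpow (by linarith [enDen_nonneg u x]) (by linarith)
  have h1 : ∑ j : Fin 2, lineDeriv ℝ (logCut r R) x (EuclideanSpace.single j (1 : ℝ))
        * stressRadial p (3 / 2) u j x
      = -(∑ j : Fin 2, x j * stressRadial p (3 / 2) u j x) / ‖x‖ ^ 2 := by
    simp only [lineDeriv_logCut_annulus hr hx hx', Fin.sum_univ_two,
      EuclideanSpace.inner_single_right]
    simp
    ring
  rw [h1, stressRadial_radial, div_le_iff₀ hx0]
  have h2 := norm_fderiv_sq_le (u := u) x
  have h3 : p * (1 + enDen u x) ^ (p / 2 - 1) * ‖fderiv ℝ u x x‖ ^ 2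
      ≤ p * (1 + enDen u x) ^ (p / 2 - 1) * (enDen u x * ‖x‖ ^ 2) := by gcongr
  nlinarith [mul_nonneg (sub_nonneg.2 hW) hx0.le]

end

/-! ### Integration by parts -/

/-- For a smooth `p`-harmonic map `u : B₁ ⊂ ℝ² → Sⁿ`, `p > 2`, and `0 < r < R < 1`:
`(p−2)·log(R/r)·‖∇u‖²_{L²(B_r)} ≤ p·‖(1+|∇u|²)^{p/2−1}‖_{L^∞(B_R∖B_r)}·(2‖∇u‖²_{L²(B_R∖B_r)} + R² − r²)`. -/
theorem p_harmonic_log_estimate {n : ℕ} (p : ℝ) (hp : 2 < p)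
    (u : EuclideanSpace ℝ (Fin 2) → EuclideanSpace ℝ (Fin (n + 1)))
    (hsm : ContDiffOn ℝ (⊤ : ℕ∞) u (ball 0 1))
    (hsph : ∀ x ∈ ball (0 : EuclideanSpace ℝ (Fin 2)) 1, ‖u x‖ = 1)
    (hEL : ∀ x ∈ ball (0 : EuclideanSpace ℝ (Fin 2)) 1,
      (∑ i : Fin 2, fderiv ℝ
          (fun y => ((1 + enDen u y) ^ (p / 2 - 1)) • fderiv ℝ u y (EuclideanSpace.single i (1 : ℝ)))
          x (EuclideanSpace.single i (1 : ℝ)))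
        = -(((1 + enDen u x) ^ (p / 2 - 1)) * enDen u x) • u x)
    (r R : ℝ) (hr : 0 < r) (hrR : r < R) (hR : R < 1) :
    (p - 2) * Real.log (R / r) * (∫ x in ball (0 : EuclideanSpace ℝ (Fin 2)) r, enDen u x)
      ≤ p * (⨆ x ∈ (ball (0 : EuclideanSpace ℝ (Fin 2)) R \ closedBall 0 r),
              (1 + enDen u x) ^ (p / 2 - 1)) *
          (2 * (∫ x in (ball (0 : EuclideanSpace ℝ (Fin 2)) R \ closedBall 0 r), enDen u x)
            + (R ^ 2 - r ^ 2)) := by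
  have hR0 : 0 < R := hr.trans hrR
  set A := ball (0 : EuclideanSpace ℝ (Fin 2)) R \ closedBall 0 r with hA
  set W : EuclideanSpace ℝ (Fin 2) → ℝ := fun x => (1 + enDen u x) ^ (p / 2 - 1) with hWdef
  have hAmeas : MeasurableSet A := measurableSet_ball.diff measurableSet_closedBall
  have hAfin : volume A ≠ ⊤ := ((measure_mono Set.sdiff_subset).trans_lt measure_ball_lt_top).ne
  have hsub : closedBall (0 : EuclideanSpace ℝ (Fin 2)) R ⊆ ball 0 1 := closedBall_subset_ball hR
  have hW1 : ∀ x, 1 ≤ W x := fun x =>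
    Real.one_le_rpow (by linarith [enDen_nonneg u x]) (by linarith)
  set M := ⨆ x ∈ A, W x with hM
  have hWM : ∀ x ∈ A, W x ≤ M := by
    obtain ⟨B, hB⟩ := (isCompact_closedBall (0 : EuclideanSpace ℝ (Fin 2)) R).exists_bound_of_continuousOn
      ((contDiffOn_weight hsm (p / 2 - 1)).continuousOn.mono hsub)
    have hB' : ∀ x ∈ A, W x ≤ B := fun x hx =>
      (le_abs_self _).trans (hB x (ball_subset_closedBall hx.1))
    have hB0 : 0 ≤ B := (norm_nonneg _).trans (hB 0 (mem_closedBall_self hR0.le))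
    -- off `A` the inner supremum is over an empty index type and equals `0`, whence `0 ≤ B`
    have hbdd : BddAbove (Set.range fun x => ⨆ (_ : x ∈ A), W x) := by
      refine ⟨B, ?_⟩
      rintro _ ⟨x, rfl⟩
      exact Real.iSup_le (fun hx => hB' x hx) hB0
    intro x hx
    have h := le_ciSup hbdd x
    simpa [hx] using h
  have hM1 : 1 ≤ M := by
    -- a point of `A` is needed: the supremum over an empty set would be `0`
    have hx : EuclideanSpace.single (0 : Fin 2) ((r + R) / 2) ∈ A := by
      have : |(r + R) / 2| = (r + R) / 2 := abs_of_pos (by linarith)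
      simp only [hA, Set.mem_sdiff, mem_ball_zero_iff, mem_closedBall_zero_iff,
        PiLp.norm_single, Real.norm_eq_abs, this]
      constructor <;> linarith
    exact (hW1 _).trans (hWM _ hx)
  have heint : IntegrableOn (enDen u) (ball 0 R) :=
    (((contDiffOn_enDen hsm).continuousOn.mono hsub).integrableOn_compact
      (isCompact_closedBall _ _)).mono_set ball_subset_closedBall
  have heA : IntegrableOn (enDen u) A := heint.mono_set Set.sdiff_subset
  have her : IntegrableOn (enDen u) (ball 0 r) := heint.mono_set (ball_subset_ball hrR.le)
  -- a smooth cutoff extends the field to the whole plane without changing it on `B_R`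
  let η : ContDiffBump (0 : EuclideanSpace ℝ (Fin 2)) := ⟨R, (R + 1) / 2, hR0, by linarith⟩
  set G : Fin 2 → EuclideanSpace ℝ (Fin 2) → ℝ :=
    fun j y => η y * stressRadial p (3 / 2) u j y with hG
  have hGcs : ∀ j, HasCompactSupport (G j) := fun j => η.hasCompactSupport.mul_right
  have hGsm : ∀ j, ContDiff ℝ 1 (G j) := by
    intro j
    refine contDiff_iff_contDiffAt.2 fun x => ?_
    by_cases hx : x ∈ tsupport (G j)
    swap
    · exact contDiffAt_const.congr_of_eventuallyEq (notMem_tsupport_iff_eventuallyEq.1 hx)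
    have hx1 : x ∈ ball (0 : EuclideanSpace ℝ (Fin 2)) 1 := by
      have h := tsupport_mul_subset_left hx
      rw [η.tsupport_eq] at h
      exact closedBall_subset_ball (show (R + 1) / 2 < 1 by linarith) h
    exact η.contDiff.contDiffAt.mul
      ((contDiffOn_stressRadial hsm p (3 / 2) j).contDiffAt (isOpen_ball.mem_nhds hx1))
  have hGeq : ∀ j, ∀ x ∈ ball (0 : EuclideanSpace ℝ (Fin 2)) R,
      G j =ᶠ[nhds x] stressRadial p (3 / 2) u j := by
    intro j x hx
    filter_upwards [isOpen_ball.mem_nhds hx] with y hy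
    simp [hG, η.one_of_mem_closedBall (ball_subset_closedBall hy)]
  have hlip := logCut_lipschitz hr hrR
  have hparts : ∀ j, ∫ x, lineDeriv ℝ (logCut r R) x (EuclideanSpace.single j (1 : ℝ)) * G j x
      = ∫ x, -(fderiv ℝ (G j) x (EuclideanSpace.single j (1 : ℝ))) * logCut r R x := by
    intro j
    obtain ⟨C, hC⟩ := (hGsm j).lipschitzWith_of_hasCompactSupport (hGcs j) (by simp)
    rw [hlip.integral_lineDeriv_mul_eq hC (hGcs j)]
    refine integral_congr_ae (.of_forall fun x => ?_)
    simp only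
    rw [((hGsm j).differentiable (by simp) x).lineDeriv_eq_fderiv, map_neg]
  have hint1 : ∀ j, Integrable
      fun x => lineDeriv ℝ (logCut r R) x (EuclideanSpace.single j (1 : ℝ)) * G j x := fun j =>
    ((hGsm j).continuous.integrable_of_hasCompactSupport (hGcs j)).mul_of_top_right
      (hlip.memLp_lineDeriv _)
  have hint2 : ∀ j, Integrable
      fun x => -(fderiv ℝ (G j) x (EuclideanSpace.single j (1 : ℝ))) * logCut r R x := by
    intro j
    refine Continuous.integrable_of_hasCompactSupport ?_ ?_
    · exact (((hGsm j).continuous_fderiv (by simp)).clm_apply continuous_const).neg.mul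
        hlip.continuous
    · exact (((hGcs j).fderiv_apply ℝ _).neg).mul_right
  have hsum : ∫ x, ∑ j, lineDeriv ℝ (logCut r R) x (EuclideanSpace.single j (1 : ℝ)) * G j x
      = ∫ x, ∑ j, -(fderiv ℝ (G j) x (EuclideanSpace.single j (1 : ℝ))) * logCut r R x := by
    rw [integral_finsetSum _ fun j _ => hint1 j, integral_finsetSum _ fun j _ => hint2 j]
    exact Finset.sum_congr rfl fun j _ => hparts j
  have hlower : (p - 2) * Real.log (R / r) * (∫ x in ball (0 : EuclideanSpace ℝ (Fin 2)) r, enDen u x)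
      ≤ ∫ x, ∑ j, -(fderiv ℝ (G j) x (EuclideanSpace.single j (1 : ℝ))) * logCut r R x := by
    rw [← integral_const_mul, ← integral_indicator measurableSet_ball]
    refine integral_mono ((integrable_indicator_iff measurableSet_ball).2 (her.const_mul _))
      (integrable_finsetSum _ fun j _ => hint2 j) fun x => ?_
    simp only
    have hf0 := logCut_nonneg hr hrR x
    rcases le_or_gt R ‖x‖ with hxR | hxR
    · rw [Set.indicator_of_notMem (by rw [mem_ball_zero_iff]; linarith)]
      simp [logCut_outer hr hrR hxR]
    · have hxb : x ∈ ball (0 : EuclideanSpace ℝ (Fin 2)) R := by simpa using hxR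
      have hx1 := hsub (ball_subset_closedBall hxb)
      have hdiv := stressRadial_div p (3 / 2) hsm hsph hx1 (hEL x hx1)
      have haux := rpow_aux (p / 2 - 1) (enDen u x) (by linarith) (enDen_nonneg u x)
      have hkey : ∑ j, -(fderiv ℝ (G j) x (EuclideanSpace.single j (1 : ℝ))) * logCut r R x
          ≥ (p - 2) * enDen u x * logCut r R x := by
        rw [← Finset.sum_mul, Finset.sum_neg_distrib]
        simp only [(hGeq _ x hxb).fderiv_eq]
        rw [hdiv]
        refine mul_le_mul_of_nonneg_right ?_ hf0
        linarith
      by_cases hxr : x ∈ ball (0 : EuclideanSpace ℝ (Fin 2)) r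
      · rw [Set.indicator_of_mem hxr]
        rw [mem_ball_zero_iff] at hxr
        rw [logCut_inner hxr.le] at hkey ⊢
        linarith
      · rw [Set.indicator_of_notMem hxr]
        refine le_trans ?_ hkey
        have := enDen_nonneg u x
        have : 0 ≤ p - 2 := by linarith
        positivity
  have hupper : ∫ x, ∑ j, lineDeriv ℝ (logCut r R) x (EuclideanSpace.single j (1 : ℝ)) * G j x
      ≤ ∫ x in A, ((p - 1) * M * enDen u x + 1 / 2) := by
    rw [← integral_indicator hAmeas]
    refine integral_mono_ae (integrable_finsetSum _ fun j _ => hint1 j)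
      ((integrable_indicator_iff hAmeas).2 ((heA.const_mul _).add (integrableOn_const hAfin))) ?_
    have hs : ∀ ρ : ℝ, ∀ᵐ x : EuclideanSpace ℝ (Fin 2), x ∉ sphere (0 : EuclideanSpace ℝ (Fin 2)) ρ :=
      fun ρ => measure_eq_zero_iff_ae_notMem.1 (Measure.addHaar_sphere volume 0 ρ)
    filter_upwards [hs r, hs R] with x hxr hxR
    rw [mem_sphere_zero_iff_norm] at hxr hxR
    rcases lt_or_gt_of_ne hxr with hxr | hxr
    · rw [Set.indicator_of_notMem (fun h => h.2 (by simpa using hxr.le))]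
      simp [lineDeriv_logCut_inner hxr]
    rcases lt_or_gt_of_ne hxR with hxR | hxR
    · have hxA : x ∈ A := ⟨by simpa using hxR, by simpa using hxr⟩
      rw [Set.indicator_of_mem hxA]
      have h := flux_le (u := u) hp hr hxr hxR
      simp only [(hGeq _ x hxA.1).eq_of_nhds]
      refine h.trans ?_
      have := enDen_nonneg u x
      have : 0 ≤ p - 1 := by linarith
      have := hWM x hxA
      gcongr
    · rw [Set.indicator_of_notMem (fun h => absurd h.1 (by simpa using hxR.le))]
      simp [lineDeriv_logCut_outer hr hrR hxR]
  have hvol : volume.real A = π * (R ^ 2 - r ^ 2) := by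
    rw [hA, measureReal_sdiff (closedBall_subset_ball hrR) measurableSet_closedBall]
    simp [Measure.real, ENNReal.toReal_mul, Real.pi_pos.le, hr.le, hR0.le]
    ring
  have hfinal : ∫ x in A, ((p - 1) * M * enDen u x + 1 / 2)
      = (p - 1) * M * (∫ x in A, enDen u x) + 1 / 2 * (π * (R ^ 2 - r ^ 2)) := by
    rw [integral_add (heA.const_mul _) (integrableOn_const hAfin), integral_const_mul,
      setIntegral_const, hvol, smul_eq_mul]
    ring
  have hI0 : 0 ≤ ∫ x in A, enDen u x := integral_nonneg fun x => enDen_nonneg u x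
  have hD0 : 0 ≤ R ^ 2 - r ^ 2 := by nlinarith
  have h1 : (p - 1) * M * (∫ x in A, enDen u x) ≤ 2 * p * M * (∫ x in A, enDen u x) := by
    gcongr
    linarith
  have h2 : 1 / 2 * π ≤ p * M := by nlinarith [Real.pi_le_four]
  have h3 := mul_le_mul_of_nonneg_right h2 hD0
  calc _ ≤ _ := hlower
    _ = _ := hsum.symm
    _ ≤ _ := hupper
    _ = _ := hfinal
    _ ≤ _ := by linarith
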